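/- Let 𝔤 be a real Lie algebra with an algebraic Cartan decomposition 𝔤 = 𝔨 ⊕ 𝔭. If W ⊆ 𝔭 is a Lie triple system, then the sum W + Z_𝔭(W) is again a Lie triple system in 𝔭, where Z_𝔭(W) = {z ∈ 𝔭 : ⁅w,z⁆ = 0 for all w ∈ W}. (This is the construction used in the proofs of Lemmas 4.4 and 4.5 of the paper to produce Lie triple systems containing a given maximal one.) -/

import Mathlib

/-!
Since `⁅W, Z⁆ = 0`, the Jacobi identity gives `⁅⁅W, W⁆, Z⁆ = 0` and `⁅⁅Z, Z⁆, W⁆ = 0`, so the triple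
bracket of `wᵢ + zᵢ` is `⁅⁅w₁, w₂⁆, w₃⁆ + ⁅⁅z₁, z₂⁆, z₃⁆`. The first term lies in `W` by hypothesis.
The second lies in `𝔭` by the Cartan relations and commutes with `W` because `ad w` is a
derivation that kills each `zᵢ`, hence it lies in `Z`.
-/

/-- Let `𝔤` be a real Lie algebra with an algebraic Cartan decomposition
`𝔤 = 𝔨 ⊕ 𝔭`.  If `W ⊆ 𝔭` is a Lie triple system, then the sum `W + Z_𝔭(W)` is again a
Lie triple system in `𝔭`, where `Z_𝔭(W) = {z ∈ 𝔭 : ⁅w,z⁆ = 0 for all w ∈ W}`. -/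
theorem sup_centralizer_is_lieTripleSystem
    (g : Type*) [LieRing g] [LieAlgebra ℝ g]
    (𝔨 𝔭 : Submodule ℝ g)
    (hcompl : IsCompl 𝔨 𝔭)
    (hkk : ∀ x ∈ 𝔨, ∀ y ∈ 𝔨, ⁅x, y⁆ ∈ 𝔨)
    (hkp : ∀ x ∈ 𝔨, ∀ y ∈ 𝔭, ⁅x, y⁆ ∈ 𝔭)
    (hpp : ∀ x ∈ 𝔭, ∀ y ∈ 𝔭, ⁅x, y⁆ ∈ 𝔨)
    (W : Submodule ℝ g) (hW𝔭 : W ≤ 𝔭)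
    (hW : ∀ x ∈ W, ∀ y ∈ W, ∀ z ∈ W, ⁅⁅x, y⁆, z⁆ ∈ W)
    (Z : Submodule ℝ g)
    (hZ : (Z : Set g) = {z : g | z ∈ 𝔭 ∧ ∀ w ∈ W, ⁅w, z⁆ = 0}) :
    W ⊔ Z ≤ 𝔭 ∧ ∀ x ∈ W ⊔ Z, ∀ y ∈ W ⊔ Z, ∀ z ∈ W ⊔ Z, ⁅⁅x, y⁆, z⁆ ∈ W ⊔ Z := by
  have memZ : ∀ z, z ∈ Z ↔ z ∈ 𝔭 ∧ ∀ w ∈ W, ⁅w, z⁆ = 0 := fun z => by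
    rw [← SetLike.mem_coe, hZ, Set.mem_setOf_eq]
  have hZW : ∀ z ∈ Z, ∀ w ∈ W, ⁅z, w⁆ = 0 := fun z hz w hw => by
    rw [← lie_skew, ((memZ z).1 hz).2 w hw, neg_zero]
  refine ⟨sup_le hW𝔭 fun z hz => ((memZ z).1 hz).1, fun x hx y hy z hz => ?_⟩
  obtain ⟨w₁, hw₁, z₁, hz₁, rfl⟩ := Submodule.mem_sup.1 hx
  obtain ⟨w₂, hw₂, z₂, hz₂, rfl⟩ := Submodule.mem_sup.1 hy
  obtain ⟨w₃, hw₃, z₃, hz₃, rfl⟩ := Submodule.mem_sup.1 hz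
  obtain ⟨hp₁, hc₁⟩ := (memZ z₁).1 hz₁
  obtain ⟨hp₂, hc₂⟩ := (memZ z₂).1 hz₂
  obtain ⟨hp₃, hc₃⟩ := (memZ z₃).1 hz₃
  have hZZZ : ⁅⁅z₁, z₂⁆, z₃⁆ ∈ Z := by
    refine (memZ _).2 ⟨hkp _ (hpp _ hp₁ _ hp₂) _ hp₃, fun w hw => ?_⟩
    rw [leibniz_lie w ⁅z₁, z₂⁆ z₃, leibniz_lie w z₁ z₂, hc₁ w hw, hc₂ w hw, hc₃ w hw]
    simp
  have hWWZ : ⁅⁅w₁, w₂⁆, z₃⁆ = 0 := by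
    rw [lie_lie, hc₃ w₁ hw₁, hc₃ w₂ hw₂, lie_zero, lie_zero, sub_zero]
  have hZZW : ⁅⁅z₁, z₂⁆, w₃⁆ = 0 := by
    rw [lie_lie, hZW z₁ hz₁ w₃ hw₃, hZW z₂ hz₂ w₃ hw₃, lie_zero, lie_zero, sub_zero]
  refine Submodule.mem_sup.2
    ⟨⁅⁅w₁, w₂⁆, w₃⁆, hW _ hw₁ _ hw₂ _ hw₃, ⁅⁅z₁, z₂⁆, z₃⁆, hZZZ, ?_⟩
  simp only [add_lie, lie_add, hc₂ w₁ hw₁, hZW z₁ hz₁ w₂ hw₂, hWWZ, hZZW, zero_lie,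
    add_zero, zero_add]
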